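/- Let φ, ψ : S¹ → ℝ² be continuous injective closed curves (embeddings). Suppose that for every smooth compactly supported 1-form α on ℝ², the line integrals agree: ∫_{S¹} φ*α = ∫_{S¹} ψ*α, where φ and ψ are additionally C¹ immersions. Then the images coincide: φ(S¹) = ψ(S¹). -/

import Mathlib

/-!
A point `x = φ t₀` off the compact image of `ψ` is detected by a bump `1`-form aligned with the
tangent `v = φ'(t₀)`: take `α = f · ⟨v, ·⟩` with `f ≥ 0` a bump function at `x`.

No local parametrization near `t₀` is needed. The set `B` of parameters where `⟨v, φ'⟩ ≤ 0` is
compact, and `x ∉ φ(B)`, since by embeddedness every parameter over `x` has the same velocity `v`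
(`deriv_eq_of_eq`) and `⟨v, v⟩ > 0`. Choosing the support of `f` off both `φ(B)` and the image of
`ψ`, the integrand for `φ` is continuous, nonnegative and positive at `t₀`, whereas the integrand
for `ψ` vanishes identically. This gives one inclusion (`image_subset_of_current_eq`), and the
other follows by exchanging the curves.
-/

open MeasureTheory

/-- The velocity of an embedded closed curve depends only on the point of the image: the only
coincidence of parameters in `[0, 1]` is that of the endpoints, where periodicity applies. -/
lemma deriv_eq_of_eq (φ : ℝ → ℝ × ℝ) (hper : ∀ t, φ (t + 1) = φ t)
    (hinj : Set.InjOn φ (Set.Ico 0 1)) {s t : ℝ} (hs : s ∈ Set.Icc (0 : ℝ) 1)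
    (ht : t ∈ Set.Icc (0 : ℝ) 1) (h : φ s = φ t) : deriv φ s = deriv φ t := by
  have key : ∀ s ∈ Set.Icc (0 : ℝ) 1, ∃ s' ∈ Set.Ico (0 : ℝ) 1,
      φ s' = φ s ∧ deriv φ s' = deriv φ s := by
    intro s hs
    rcases hs.2.lt_or_eq with h1 | rfl
    · exact ⟨s, ⟨hs.1, h1⟩, rfl, rfl⟩
    · refine ⟨0, by simp, by simpa using (hper 0).symm, ?_⟩
      have h2 := deriv_comp_add_const φ 1 0
      rw [funext hper] at h2
      simpa using h2
  obtain ⟨s', hs', h1, h2⟩ := key s hs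
  obtain ⟨t', ht', h3, h4⟩ := key t ht
  rw [← h2, ← h4, hinj hs' ht' (by rw [h1, h3, h])]

/-- One inclusion of images. Only continuity of `ψ` is needed, to make its image compact. -/
lemma image_subset_of_current_eq (φ ψ : ℝ → ℝ × ℝ)
    (hφ : ContDiff ℝ 1 φ) (hψ : Continuous ψ)
    (hφper : ∀ t, φ (t + 1) = φ t)
    (hφinj : Set.InjOn φ (Set.Ico 0 1))
    (hφimm : ∀ t, deriv φ t ≠ 0)
    (hcur : ∀ α₁ α₂ : ℝ × ℝ → ℝ,
      ContDiff ℝ (⊤ : ℕ∞) α₁ → ContDiff ℝ (⊤ : ℕ∞) α₂ →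
      HasCompactSupport α₁ → HasCompactSupport α₂ →
      (∫ t in (0:ℝ)..1, α₁ (φ t) * (deriv φ t).1 + α₂ (φ t) * (deriv φ t).2)
        = ∫ t in (0:ℝ)..1, α₁ (ψ t) * (deriv ψ t).1 + α₂ (ψ t) * (deriv ψ t).2) :
    φ '' Set.Icc 0 1 ⊆ ψ '' Set.Icc 0 1 := by
  rintro _ ⟨t₀, ht₀, rfl⟩
  by_contra hx
  set v := deriv φ t₀ with hv
  have hd : Continuous (deriv φ) := hφ.continuous_deriv le_rfl
  have hc := hφ.continuous
  have hl : Continuous fun t => v.1 * (deriv φ t).1 + v.2 * (deriv φ t).2 := by fun_prop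
  have hpos : 0 < v.1 * v.1 + v.2 * v.2 := by
    by_contra! hle
    refine hφimm t₀ (Prod.ext ?_ ?_)
    · change v.1 = 0
      nlinarith [mul_self_nonneg v.1, mul_self_nonneg v.2]
    · change v.2 = 0
      nlinarith [mul_self_nonneg v.1, mul_self_nonneg v.2]
  let B : Set ℝ := Set.Icc 0 1 ∩ {t | v.1 * (deriv φ t).1 + v.2 * (deriv φ t).2 ≤ 0}
  have hB : IsCompact B := isCompact_Icc.inter_right (isClosed_le hl continuous_const)
  have hxB : φ t₀ ∉ φ '' B := by
    rintro ⟨t, ⟨ht, hle⟩, h⟩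
    have h1 := deriv_eq_of_eq φ hφper hφinj ht ht₀ h
    simp only [Set.mem_ofPred_eq, h1, ← hv] at hle
    exact absurd hle (not_le.2 hpos)
  have hclosed : IsClosed (φ '' B ∪ ψ '' Set.Icc 0 1) :=
    (hB.image hc).isClosed.union (isCompact_Icc.image hψ).isClosed
  have hnhds : (φ '' B ∪ ψ '' Set.Icc 0 1)ᶜ ∈ nhds (φ t₀) :=
    hclosed.isOpen_compl.mem_nhds (by simp only [Set.mem_compl_iff, Set.mem_union]; tauto)
  obtain ⟨f, hsupp, hcomp, hf, hrange, hf1⟩ :=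
    exists_contDiff_tsupport_subset (n := (⊤ : ℕ∞)) hnhds
  have hzero : ∀ y ∈ φ '' B ∪ ψ '' Set.Icc 0 1, f y = 0 := fun y hy =>
    image_eq_zero_of_notMem_tsupport fun h => hsupp h hy
  have hf0 : ∀ y, 0 ≤ f y := fun y => (hrange ⟨y, rfl⟩).1
  have hfc : Continuous f := hf.continuous
  have h := hcur (fun y => v.1 * f y) (fun y => v.2 * f y)
    (contDiff_const.mul hf) (contDiff_const.mul hf) hcomp.mul_left hcomp.mul_left
  have hR : (∫ t in (0:ℝ)..1, v.1 * f (ψ t) * (deriv ψ t).1 + v.2 * f (ψ t) * (deriv ψ t).2)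
      = 0 := by
    refine intervalIntegral.integral_zero_ae (Filter.Eventually.of_forall fun t ht => ?_)
    rw [Set.uIoc_of_le zero_le_one] at ht
    simp [hzero (ψ t) (Or.inr ⟨t, ⟨ht.1.le, ht.2⟩, rfl⟩)]
  have hL : 0 < ∫ t in (0:ℝ)..1,
      v.1 * f (φ t) * (deriv φ t).1 + v.2 * f (φ t) * (deriv φ t).2 := by
    refine intervalIntegral.integral_pos zero_lt_one (by fun_prop) (fun t ht => ?_)
      ⟨t₀, ht₀, ?_⟩
    · by_cases htB : t ∈ B
      · simp [hzero (φ t) (Or.inl ⟨t, htB, rfl⟩)]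
      · have h1 : 0 ≤ v.1 * (deriv φ t).1 + v.2 * (deriv φ t).2 := by
          by_contra! hlt
          exact htB ⟨⟨ht.1.le, ht.2⟩, hlt.le⟩
        calc 0 ≤ f (φ t) * (v.1 * (deriv φ t).1 + v.2 * (deriv φ t).2) :=
              mul_nonneg (hf0 _) h1
          _ = _ := by ring
    · simpa [hf1] using hpos
  exact hL.ne' (h.trans hR)

/-- Embedded closed curves with the same currents have the same image.
The circle is modeled as periodic maps `ℝ → ℝ²` of period 1; embeddedness is
injectivity on a fundamental domain `[0, 1)`. -/
theorem stmt11 (φ ψ : ℝ → ℝ × ℝ)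
    (hφ : ContDiff ℝ 1 φ) (hψ : ContDiff ℝ 1 ψ)
    (hφper : ∀ t, φ (t + 1) = φ t) (hψper : ∀ t, ψ (t + 1) = ψ t)
    (hφinj : Set.InjOn φ (Set.Ico 0 1)) (hψinj : Set.InjOn ψ (Set.Ico 0 1))
    (hφimm : ∀ t, deriv φ t ≠ 0) (hψimm : ∀ t, deriv ψ t ≠ 0)
    (hcur : ∀ α₁ α₂ : ℝ × ℝ → ℝ,
      ContDiff ℝ (⊤ : ℕ∞) α₁ → ContDiff ℝ (⊤ : ℕ∞) α₂ →
      HasCompactSupport α₁ → HasCompactSupport α₂ →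
      (∫ t in (0:ℝ)..1, α₁ (φ t) * (deriv φ t).1 + α₂ (φ t) * (deriv φ t).2)
        = ∫ t in (0:ℝ)..1, α₁ (ψ t) * (deriv ψ t).1 + α₂ (ψ t) * (deriv ψ t).2) :
    φ '' Set.Icc 0 1 = ψ '' Set.Icc 0 1 := by
  exact (image_subset_of_current_eq φ ψ hφ hψ.continuous hφper hφinj hφimm hcur).antisymm
    (image_subset_of_current_eq ψ φ hψ hφ.continuous hψper hψinj hψimm
      fun α₁ α₂ h₁ h₂ h₃ h₄ => (hcur α₁ α₂ h₁ h₂ h₃ h₄).symm)
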